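/- Let (X, Y) be jointly distributed random variables with X ∈ ℝ^d, let r > 0 and 0 < δ < 1, and suppose that drawing X̂ from the conditional law of X given Y (conditionally independent of X given Y) yields P[ ‖X − X̂‖ ≤ r ] ≥ 1 − δ. Let Z = X + ε where ε ~ N(0, σ² I_d) is independent of (X, Y). If σ ≥ r/(2δ), then drawing X̂ from the conditional law of X given (Y, Z) (conditionally independent of X given (Y, Z)) yields P[ ‖X − X̂‖ ≤ r ] ≥ 1 − 3δ. -/

import Mathlib

/-!
Write `X̂_W` for a sample from the conditional law of `X` given `W`. Given `(Y, Z)`, the pair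
`(X, X̂_Y)` has the same law as `(X̂_{(Y,Z)}, X̂_Y)`, while given `Y` alone `X` and `X̂_Y` are
exchangeable. When `X` and `X̂_Y` are `r`-close, the laws of the measurements they generate
are within `r / (2σ) ≤ δ` in total variation, by Le Cam's inequality and the Hellinger affinity
`exp (-‖a - b‖² / (8σ²))` of two translated Gaussians. So pretending that `Z` was generated from
`X̂_Y` costs at most `δ + P[‖X - X̂_Y‖ > r]`, and by exchangeability it turns the event
`‖X̂_{(Y,Z)} - X̂_Y‖ ≤ r`, which has probability at least `1 - δ`, into `‖X̂_{(Y,Z)} - X‖ ≤ r`.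
-/

open MeasureTheory ProbabilityTheory

/-- The density of the isotropic Gaussian `N(0, σ² I_d)` on `ℝ^d`. -/
noncomputable def gaussDensity (d : ℕ) (σ2 : ℝ) (x : EuclideanSpace ℝ (Fin d)) : ℝ :=
  (2 * Real.pi * σ2) ^ (-(d : ℝ) / 2) * Real.exp (-‖x‖ ^ 2 / (2 * σ2))

/-- The isotropic Gaussian measure `N(0, σ² I_d)` on `ℝ^d`. -/
noncomputable def gaussMeasure (d : ℕ) (σ2 : ℝ) : Measure (EuclideanSpace ℝ (Fin d)) :=
  volume.withDensity fun x => ENNReal.ofReal (gaussDensity d σ2 x)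

open scoped ENNReal

section TotalVariation

variable {α : Type*} [MeasurableSpace α]

/-- The total variation distance of two probability measures, encoded as the mass of the positive
part of `P - Q`. -/
noncomputable def tvDist (P Q : Measure α) : ℝ≥0∞ := (P - Q) Set.univ

lemma lintegral_le_lintegral_add_tvDist {P Q : Measure α} [IsFiniteMeasure P] [IsFiniteMeasure Q]
    {g : α → ℝ≥0∞} (hg : ∀ x, g x ≤ 1) : ∫⁻ x, g x ∂P ≤ ∫⁻ x, g x ∂Q + tvDist P Q := by
  have hPQ : P ≤ P - Q + Q := Measure.sub_le_iff_le_add.mp le_rfl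
  calc ∫⁻ x, g x ∂P ≤ ∫⁻ x, g x ∂(P - Q + Q) := lintegral_mono' hPQ le_rfl
    _ = ∫⁻ x, g x ∂(P - Q) + ∫⁻ x, g x ∂Q := lintegral_add_measure ..
    _ ≤ tvDist P Q + ∫⁻ x, g x ∂Q := by
      gcongr
      exact lintegral_le_meas (fun x => hg x) (by simp)
    _ = ∫⁻ x, g x ∂Q + tvDist P Q := add_comm ..

variable {μ : Measure α} {p q : α → ℝ}

lemma tvDist_withDensity_ofReal (hp : Measurable p) (hq : Measurable q) (hq0 : ∀ x, 0 ≤ q x)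
    (hpi : Integrable p μ) (hqi : Integrable q μ) :
    tvDist (μ.withDensity fun x => ENNReal.ofReal (p x))
        (μ.withDensity fun x => ENNReal.ofReal (q x)) =
      ENNReal.ofReal (∫ x, max (p x - q x) 0 ∂μ) := by
  have : IsFiniteMeasure (μ.withDensity fun x => ENNReal.ofReal (q x)) :=
    isFiniteMeasure_withDensity_ofReal hqi.2
  rw [tvDist, ← Measure.withDensity_sub hp.ennreal_ofReal hq.ennreal_ofReal,
    withDensity_apply _ MeasurableSet.univ, setLIntegral_univ,
    ofReal_integral_eq_lintegral_ofReal (f := fun x => max (p x - q x) 0)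
      (hpi.sub hqi).pos_part (.of_forall fun x => le_max_right _ _)]
  refine lintegral_congr fun x => ?_
  rw [Pi.sub_apply, ← ENNReal.ofReal_sub _ (hq0 x), ENNReal.ofReal_max, ENNReal.ofReal_zero,
    max_eq_left zero_le]

lemma memLp_two_sqrt (hp0 : ∀ x, 0 ≤ p x) (hp : Integrable p μ) :
    MemLp (fun x => √(p x)) 2 μ := by
  refine (memLp_two_iff_integrable_sq
    (Real.continuous_sqrt.comp_aestronglyMeasurable hp.aestronglyMeasurable)).mpr ?_
  simpa only [Real.sq_sqrt (hp0 _)] using hp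

lemma integral_mul_le_sqrt_mul_sqrt {f g : α → ℝ} (hf0 : ∀ x, 0 ≤ f x) (hg0 : ∀ x, 0 ≤ g x)
    (hf : MemLp f 2 μ) (hg : MemLp g 2 μ) :
    ∫ x, f x * g x ∂μ ≤ √(∫ x, f x ^ 2 ∂μ) * √(∫ x, g x ^ 2 ∂μ) := by
  have holder := integral_mul_le_Lp_mul_Lq_of_nonneg Real.HolderConjugate.two_two
    (.of_forall hf0) (.of_forall hg0) (by simpa using hf) (by simpa using hg)
  simpa only [Real.rpow_two, ← Real.sqrt_eq_rpow] using holder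

lemma integral_sqrt_add_mul_sqrt_sq (hp0 : ∀ x, 0 ≤ p x) (hq0 : ∀ x, 0 ≤ q x)
    (hp : Integrable p μ) (hq : Integrable q μ) (s : ℝ) :
    ∫ x, (√(p x) + s * √(q x)) ^ 2 ∂μ =
      ∫ x, p x ∂μ + 2 * s * ∫ x, √(p x) * √(q x) ∂μ + s ^ 2 * ∫ x, q x ∂μ := by
  have hpq : Integrable (fun x => √(p x) * √(q x)) μ :=
    (memLp_two_sqrt hp0 hp).integrable_mul (memLp_two_sqrt hq0 hq)
  have hexpand : ∀ x, (√(p x) + s * √(q x)) ^ 2 =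
      p x + 2 * s * (√(p x) * √(q x)) + s ^ 2 * q x := fun x => by
    rw [add_sq, mul_pow, Real.sq_sqrt (hp0 x), Real.sq_sqrt (hq0 x)]
    ring
  simp only [hexpand]
  rw [integral_add (by fun_prop) (by fun_prop), integral_add hp (by fun_prop),
    integral_const_mul, integral_const_mul]

lemma integral_abs_sub_le_two_mul_sqrt (hp0 : ∀ x, 0 ≤ p x) (hq0 : ∀ x, 0 ≤ q x)
    (hp : Integrable p μ) (hq : Integrable q μ) (hp1 : ∫ x, p x ∂μ = 1) (hq1 : ∫ x, q x ∂μ = 1) :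
    ∫ x, |p x - q x| ∂μ ≤ 2 * √(1 - (∫ x, √(p x) * √(q x) ∂μ) ^ 2) := by
  set B := ∫ x, √(p x) * √(q x) ∂μ
  have hsq := integral_sqrt_add_mul_sqrt_sq hp0 hq0 hp hq
  have hsub : ∫ x, |√(p x) - √(q x)| ^ 2 ∂μ = 2 * (1 - B) := by
    simpa only [sq_abs, neg_one_mul, ← sub_eq_add_neg] using (hsq (-1)).trans (by linarith)
  have hadd : ∫ x, (√(p x) + √(q x)) ^ 2 ∂μ = 2 * (1 + B) := by
    simpa only [one_mul] using (hsq 1).trans (by linarith)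
  have hB : B ≤ 1 := by
    have : 0 ≤ ∫ x, |√(p x) - √(q x)| ^ 2 ∂μ := integral_nonneg fun x => by positivity
    linarith
  have hfactor : ∀ x, |p x - q x| = |√(p x) - √(q x)| * (√(p x) + √(q x)) := fun x => by
    rw [← abs_of_nonneg (show 0 ≤ √(p x) + √(q x) by positivity), ← abs_mul]
    congr 1
    linear_combination -Real.sq_sqrt (hp0 x) + Real.sq_sqrt (hq0 x)
  have hp2 := memLp_two_sqrt hp0 hp
  have hq2 := memLp_two_sqrt hq0 hq
  calc ∫ x, |p x - q x| ∂μ = ∫ x, |√(p x) - √(q x)| * (√(p x) + √(q x)) ∂μ := by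
        simp only [hfactor]
    _ ≤ √(∫ x, |√(p x) - √(q x)| ^ 2 ∂μ) * √(∫ x, (√(p x) + √(q x)) ^ 2 ∂μ) :=
      integral_mul_le_sqrt_mul_sqrt (fun x => abs_nonneg _) (fun x => by positivity)
        (hp2.sub hq2).abs (hp2.add hq2)
    _ = √(2 ^ 2 * (1 - B ^ 2)) := by
      rw [hsub, hadd, ← Real.sqrt_mul (by linarith)]
      ring_nf
    _ = 2 * √(1 - B ^ 2) := by
      rw [Real.sqrt_mul (by norm_num), Real.sqrt_sq (by norm_num)]

lemma tvDist_withDensity_le_sqrt (hpm : Measurable p) (hqm : Measurable q)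
    (hp0 : ∀ x, 0 ≤ p x) (hq0 : ∀ x, 0 ≤ q x)
    (hp : Integrable p μ) (hq : Integrable q μ) (hp1 : ∫ x, p x ∂μ = 1) (hq1 : ∫ x, q x ∂μ = 1) :
    tvDist (μ.withDensity fun x => ENNReal.ofReal (p x))
        (μ.withDensity fun x => ENNReal.ofReal (q x)) ≤
      ENNReal.ofReal √(1 - (∫ x, √(p x) * √(q x) ∂μ) ^ 2) := by
  rw [tvDist_withDensity_ofReal hpm hqm hq0 hp hq]
  refine ENNReal.ofReal_le_ofReal ?_
  have hmax : ∀ x, max (p x - q x) 0 = 2⁻¹ * (|p x - q x| + (p x - q x)) := fun x => by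
    rw [← max_zero_add_max_neg_zero_eq_abs_self]
    linarith [max_zero_sub_eq_self (p x - q x)]
  have hL1 := integral_abs_sub_le_two_mul_sqrt hp0 hq0 hp hq hp1 hq1
  have hpq : ∫ x, (p x - q x) ∂μ = 0 := by rw [integral_sub hp hq, hp1, hq1, sub_self]
  simp only [hmax]
  rw [integral_const_mul, integral_add (by fun_prop) (by fun_prop), hpq]
  linarith

end TotalVariation

section Gaussian

variable {d : ℕ} {v : ℝ}

lemma gaussDensity_nonneg (hv : 0 ≤ v) (x : EuclideanSpace ℝ (Fin d)) :
    0 ≤ gaussDensity d v x := by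
  unfold gaussDensity
  positivity

lemma continuous_gaussDensity : Continuous (gaussDensity d v) := by
  unfold gaussDensity
  fun_prop

lemma integral_gaussDensity (hv : 0 < v) : ∫ x, gaussDensity d v x = 1 := by
  have hexp := GaussianFourier.integral_rexp_neg_mul_sq_norm (V := EuclideanSpace ℝ (Fin d))
    (b := (2 * v)⁻¹) (by positivity)
  have hnorm : Real.pi / (2 * v)⁻¹ = 2 * Real.pi * v := by
    rw [div_inv_eq_mul]
    ring
  rw [hnorm, finrank_euclideanSpace_fin] at hexp
  have hexponent : ∀ x : EuclideanSpace ℝ (Fin d),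
      -‖x‖ ^ 2 / (2 * v) = -(2 * v)⁻¹ * ‖x‖ ^ 2 := fun x => by
    rw [div_eq_inv_mul, mul_neg, neg_mul]
  simp only [gaussDensity, hexponent]
  rw [integral_const_mul, hexp, ← Real.rpow_add (by positivity), neg_div, neg_add_cancel,
    Real.rpow_zero]

lemma integrable_gaussDensity (hv : 0 < v) : Integrable (gaussDensity d v) :=
  .of_integral_ne_zero (by simp [integral_gaussDensity hv])

lemma isProbabilityMeasure_gaussMeasure (hv : 0 < v) :
    IsProbabilityMeasure (gaussMeasure d v) := by
  constructor
  rw [gaussMeasure, withDensity_apply _ MeasurableSet.univ, setLIntegral_univ,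
    ← ofReal_integral_eq_lintegral_ofReal (integrable_gaussDensity hv)
      (.of_forall (gaussDensity_nonneg hv.le)), integral_gaussDensity hv, ENNReal.ofReal_one]

lemma gaussDensity_mul_gaussDensity (x y : EuclideanSpace ℝ (Fin d)) :
    gaussDensity d v x * gaussDensity d v y =
      (Real.exp (-‖x - y‖ ^ 2 / (8 * v)) * gaussDensity d v (midpoint ℝ x y)) ^ 2 := by
  have hmid : ‖midpoint ℝ x y‖ = ‖x + y‖ / 2 := by
    rw [midpoint_eq_smul_add, norm_smul]
    norm_num
    ring
  have hpar := parallelogram_law_with_norm ℝ x y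
  have hexponent : -‖x‖ ^ 2 / (2 * v) + -‖y‖ ^ 2 / (2 * v) =
      2 * (-‖x - y‖ ^ 2 / (8 * v) + -‖midpoint ℝ x y‖ ^ 2 / (2 * v)) := by
    rw [hmid]
    linear_combination (4 * v)⁻¹ * hpar
  unfold gaussDensity
  rw [mul_mul_mul_comm, ← Real.exp_add, hexponent, mul_left_comm, ← Real.exp_add, mul_pow,
    ← sq, ← Real.exp_nat_mul, Nat.cast_ofNat]

lemma integral_sqrt_gaussDensity_sub (hv : 0 < v) (a b : EuclideanSpace ℝ (Fin d)) :
    ∫ x, √(gaussDensity d v (x - a)) * √(gaussDensity d v (x - b)) =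
      Real.exp (-‖a - b‖ ^ 2 / (8 * v)) := by
  have hsqrt : ∀ x, √(gaussDensity d v (x - a)) * √(gaussDensity d v (x - b)) =
      Real.exp (-‖a - b‖ ^ 2 / (8 * v)) * gaussDensity d v (x - midpoint ℝ a b) := fun x => by
    have hmid : midpoint ℝ (x - a) (x - b) = x - midpoint ℝ a b := by
      simpa only [vsub_eq_sub, midpoint_self] using (midpoint_vsub_midpoint (R := ℝ) x x a b).symm
    rw [← Real.sqrt_mul (gaussDensity_nonneg hv.le _), gaussDensity_mul_gaussDensity,
      Real.sqrt_sq (mul_nonneg (Real.exp_nonneg _) (gaussDensity_nonneg hv.le _)), hmid,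
      sub_sub_sub_cancel_left, norm_sub_rev]
  simp only [hsqrt]
  rw [integral_const_mul, integral_sub_right_eq_self (gaussDensity d v), integral_gaussDensity hv,
    mul_one]

lemma map_add_left_withDensity {G : Type*} [AddGroup G] [MeasurableSpace G] [MeasurableAdd G]
    (μ : Measure G) [μ.IsAddLeftInvariant] (f : G → ℝ≥0∞) (a : G) :
    (μ.withDensity f).map (a + ·) = μ.withDensity fun x => f (-a + x) := by
  ext s hs
  rw [Measure.map_apply (measurable_const_add a) hs,
    withDensity_apply _ (measurable_const_add a hs), withDensity_apply _ hs,
    ← (measurePreserving_add_left μ a).setLIntegral_comp_preimage_emb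
      (measurableEmbedding_addLeft a) (fun x => f (-a + x))]
  simp only [neg_add_cancel_left]

lemma map_add_left_gaussMeasure (a : EuclideanSpace ℝ (Fin d)) :
    (gaussMeasure d v).map (a + ·) =
      volume.withDensity fun x => ENNReal.ofReal (gaussDensity d v (x - a)) := by
  rw [gaussMeasure, map_add_left_withDensity]
  simp only [neg_add_eq_sub]

lemma tvDist_map_add_left_gaussMeasure_le (hv : 0 < v) (a b : EuclideanSpace ℝ (Fin d)) :
    tvDist ((gaussMeasure d v).map (a + ·)) ((gaussMeasure d v).map (b + ·)) ≤
      ENNReal.ofReal (‖a - b‖ / (2 * √v)) := by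
  have hmeas (c : EuclideanSpace ℝ (Fin d)) : Measurable fun x => gaussDensity d v (x - c) :=
    (continuous_gaussDensity.comp (continuous_sub_right c)).measurable
  have hint (c : EuclideanSpace ℝ (Fin d)) : Integrable fun x => gaussDensity d v (x - c) :=
    (integrable_gaussDensity hv).comp_sub_right c
  have hone (c : EuclideanSpace ℝ (Fin d)) : ∫ x, gaussDensity d v (x - c) = 1 := by
    rw [integral_sub_right_eq_self (gaussDensity d v), integral_gaussDensity hv]
  rw [map_add_left_gaussMeasure, map_add_left_gaussMeasure]
  refine (tvDist_withDensity_le_sqrt (hmeas a) (hmeas b) (fun _ => gaussDensity_nonneg hv.le _)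
    (fun _ => gaussDensity_nonneg hv.le _) (hint a) (hint b) (hone a) (hone b)).trans
    (ENNReal.ofReal_le_ofReal ?_)
  have hB : Real.exp (-‖a - b‖ ^ 2 / (8 * v)) ^ 2 = Real.exp (-(‖a - b‖ / (2 * √v)) ^ 2) := by
    rw [← Real.exp_nat_mul, div_pow, mul_pow, Real.sq_sqrt hv.le]
    congr 1
    push_cast
    ring
  rw [integral_sqrt_gaussDensity_sub hv, hB, Real.sqrt_le_left (by positivity)]
  linarith [Real.one_sub_le_exp_neg ((‖a - b‖ / (2 * √v)) ^ 2)]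

end Gaussian

section Resampling

variable {Ω α β E F N : Type*} [MeasurableSpace Ω] [MeasurableSpace α] [MeasurableSpace β]
  [MeasurableSpace E] [MeasurableSpace F] [MeasurableSpace N] {μ : Measure Ω}

lemma hasCondDistrib_condDistrib [StandardBorelSpace E] [Nonempty E] [IsFiniteMeasure μ]
    {X : Ω → E} {W : Ω → α} (hX : AEMeasurable X μ) (hW : AEMeasurable W μ) :
    HasCondDistrib X W (condDistrib X W μ) μ :=
  ⟨hW.prodMk hX, (compProd_map_condDistrib hX).symm⟩

lemma lintegral_of_hasCondDistrib [SFinite μ] {X : Ω → E} {W : Ω → α} {κ : Kernel α E}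
    [IsSFiniteKernel κ] (h : HasCondDistrib X W κ μ) {f : α × E → ℝ≥0∞} (hf : Measurable f) :
    ∫⁻ ω, f (W ω, X ω) ∂μ = ∫⁻ ω, ∫⁻ x, f (W ω, x) ∂κ (W ω) ∂μ := by
  rw [HasLaw.lintegral_comp h hf.aemeasurable, Measure.lintegral_compProd hf,
    lintegral_map' hf.lintegral_kernel_prod_right'.aemeasurable h.aemeasurable_fst]

/-- The channel sending `w` to the law of `φ (w, ε)` with noise `ε ~ ν`. -/
noncomputable def noiseKernel (ν : Measure N) (φ : α × N → F) : Kernel α F :=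
  (Kernel.id ×ₖ Kernel.const α ν).map φ

lemma noiseKernel_apply {ν : Measure N} [SFinite ν] {φ : α × N → F} (hφ : Measurable φ) (w : α) :
    noiseKernel ν φ w = ν.map fun e => φ (w, e) := by
  rw [noiseKernel, Kernel.map_apply _ hφ, Kernel.prod_apply, Kernel.id_apply, Kernel.const_apply,
    Measure.dirac_prod, Measure.map_map hφ measurable_prodMk_left]
  rfl

lemma isMarkovKernel_noiseKernel {ν : Measure N} [IsProbabilityMeasure ν] {φ : α × N → F}
    (hφ : Measurable φ) : IsMarkovKernel (noiseKernel ν φ) :=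
  Kernel.IsMarkovKernel.map _ hφ

lemma hasCondDistrib_noiseKernel {ν : Measure N} [IsProbabilityMeasure ν]
    {W : Ω → α} {ε : Ω → N} {φ : α × N → F} (hW : AEMeasurable W μ) (hε : HasLaw ε ν μ)
    (hindep : IndepFun W ε μ) (hφ : Measurable φ) :
    HasCondDistrib (fun ω => φ (W ω, ε ω)) W (noiseKernel ν φ) μ where
  aemeasurable := by fun_prop
  map_eq := by
    have := hε.isProbabilityMeasure
    have := isMarkovKernel_noiseKernel (ν := ν) hφ
    ext s hs
    rw [Measure.compProd_apply hs]
    have hjoint : μ.map (fun ω => (W ω, ε ω)) = (μ.map W).prod ν := by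
      rw [hindep.map_prod_eq_prod_map_map hW hε.aemeasurable, hε.map_eq]
    have hψ : Measurable fun p : α × N => (p.1, φ p) := by fun_prop
    calc μ.map (fun ω => (W ω, φ (W ω, ε ω))) s
        = ((μ.map fun ω => (W ω, ε ω)).map fun p => (p.1, φ p)) s := by
          rw [AEMeasurable.map_map_of_aemeasurable (by fun_prop) (by fun_prop)]
          rfl
      _ = ∫⁻ w, noiseKernel ν φ w (Prod.mk w ⁻¹' s) ∂μ.map W := by
          rw [hjoint, Measure.map_apply hψ hs, Measure.prod_apply (hψ hs)]
          refine lintegral_congr fun w => ?_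
          rw [noiseKernel_apply hφ, Measure.map_apply (by fun_prop) (measurable_prodMk_left hs)]
          rfl

/-- The probability that `(X, X̂) ∈ S`, where `X̂` is drawn from `κ (W ω)` independently of `X`
given `W`. With `κ` the conditional law of `X` given `W`, this is resampling from the posterior. -/
noncomputable def resampleProb (μ : Measure Ω) (X : Ω → E) (W : Ω → α) (κ : Kernel α E)
    (S : Set (E × E)) : ℝ≥0∞ :=
  ∫⁻ ω, κ (W ω) (Prod.mk (X ω) ⁻¹' S) ∂μ

variable {S : Set (E × E)}

lemma measurable_kernel_apply_prodMk_preimage {κ : Kernel α E} [IsSFiniteKernel κ]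
    (hS : MeasurableSet S) {f : N → α} {g : N → E} (hf : Measurable f) (hg : Measurable g) :
    Measurable fun c => κ (f c) (Prod.mk (g c) ⁻¹' S) := by
  have hT : MeasurableSet {t : (α × E) × E | (t.1.2, t.2) ∈ S} :=
    hS.preimage (f := fun t : (α × E) × E => (t.1.2, t.2)) (by fun_prop)
  exact (Kernel.measurable_kernel_prodMk_left (κ := κ.prodMkRight E) hT).comp (hf.prodMk hg)

lemma resampleProb_eq_lintegral [SFinite μ] {X : Ω → E} {W : Ω → α} {κ K : Kernel α E}
    [IsSFiniteKernel κ] [IsSFiniteKernel K] (hX : HasCondDistrib X W K μ)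
    (hS : MeasurableSet S) (hsymm : Prod.swap ⁻¹' S = S) :
    resampleProb μ X W κ S =
      ∫⁻ ω, ∫⁻ x', K (W ω) (Prod.mk x' ⁻¹' S) ∂κ (W ω) ∂μ := by
  have hexchange (w : α) :
      ∫⁻ x, κ w (Prod.mk x ⁻¹' S) ∂K w = ∫⁻ x', K w (Prod.mk x' ⁻¹' S) ∂κ w := by
    rw [← Measure.prod_apply hS, ← Measure.prod_apply hS, ← Measure.prod_swap,
      Measure.map_apply measurable_swap hS, hsymm]
  calc resampleProb μ X W κ S
      = ∫⁻ ω, ∫⁻ x, κ (W ω) (Prod.mk x ⁻¹' S) ∂K (W ω) ∂μ :=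
        lintegral_of_hasCondDistrib (f := fun t : α × E => κ t.1 (Prod.mk t.2 ⁻¹' S)) hX
          (measurable_kernel_apply_prodMk_preimage hS measurable_fst measurable_snd)
    _ = ∫⁻ ω, ∫⁻ x', K (W ω) (Prod.mk x' ⁻¹' S) ∂κ (W ω) ∂μ := by simp only [hexchange]

/-- Given `Y = y`, the probability that a sample from `K (y, z)` is `S`-close to `x'`, when the
measurement `z` is generated by the channel `η` from the signal `x`. -/
noncomputable def crossAcceptProb (K : Kernel (β × F) E) (η : Kernel (β × E) F) (S : Set (E × E))
    (y : β) (x x' : E) : ℝ≥0∞ :=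
  ∫⁻ z, K (y, z) (Prod.mk x' ⁻¹' S) ∂η (y, x)

variable {X : Ω → E} {Y : Ω → β} {Z : Ω → F} {κ : Kernel β E} {K : Kernel (β × F) E}
  {η : Kernel (β × E) F}

lemma measurable_crossAcceptProb [IsSFiniteKernel K] [IsSFiniteKernel η] (hS : MeasurableSet S) :
    Measurable fun t : (β × E) × E => crossAcceptProb K η S t.1.1 t.1.2 t.2 := by
  have hf : Measurable fun t : ((β × E) × E) × F => K (t.1.1.1, t.2) (Prod.mk t.1.2 ⁻¹' S) :=
    measurable_kernel_apply_prodMk_preimage hS (by fun_prop) (by fun_prop)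
  exact hf.lintegral_kernel_prod_right' (κ := η.prodMkRight E)

lemma resampleProb_eq_lintegral_crossAcceptProb [SFinite μ] [IsSFiniteKernel κ]
    [IsSFiniteKernel K] [IsSFiniteKernel η]
    (hK : HasCondDistrib X (fun ω => (Y ω, Z ω)) K μ)
    (hη : HasCondDistrib Z (fun ω => (Y ω, X ω)) η μ)
    (hS : MeasurableSet S) (hsymm : Prod.swap ⁻¹' S = S) :
    resampleProb μ X Y κ S =
      ∫⁻ ω, ∫⁻ x', crossAcceptProb K η S (Y ω) (X ω) x' ∂κ (Y ω) ∂μ :=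
  calc resampleProb μ X Y κ S
      = resampleProb μ X (fun ω => (Y ω, Z ω)) (κ.prodMkRight F) S := rfl
    _ = ∫⁻ ω, ∫⁻ x', K (Y ω, Z ω) (Prod.mk x' ⁻¹' S) ∂κ (Y ω) ∂μ :=
      resampleProb_eq_lintegral hK hS hsymm
    _ = ∫⁻ ω, ∫⁻ z, ∫⁻ x', K (Y ω, z) (Prod.mk x' ⁻¹' S) ∂κ (Y ω) ∂η (Y ω, X ω) ∂μ := by
      have hg : Measurable fun t : ((β × E) × F) × E => K (t.1.1.1, t.1.2) (Prod.mk t.2 ⁻¹' S) :=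
        measurable_kernel_apply_prodMk_preimage hS (by fun_prop) (by fun_prop)
      exact lintegral_of_hasCondDistrib
        (f := fun t : (β × E) × F => ∫⁻ x', K (t.1.1, t.2) (Prod.mk x' ⁻¹' S) ∂κ t.1.1) hη
        (hg.lintegral_kernel_prod_right' (κ := (κ.prodMkRight E).prodMkRight F))
    _ = ∫⁻ ω, ∫⁻ x', crossAcceptProb K η S (Y ω) (X ω) x' ∂κ (Y ω) ∂μ := by
      refine lintegral_congr fun ω => lintegral_lintegral_swap (Measurable.aemeasurable ?_)
      exact measurable_kernel_apply_prodMk_preimage hS (f := fun t : F × E => (Y ω, t.1))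
        (by fun_prop) (by fun_prop)

lemma resampleProb_prodMk_eq_lintegral_crossAcceptProb [SFinite μ] [IsSFiniteKernel κ]
    [IsSFiniteKernel K] [IsSFiniteKernel η]
    (hκ : HasCondDistrib X Y κ μ) (hη : HasCondDistrib Z (fun ω => (Y ω, X ω)) η μ)
    (hS : MeasurableSet S) :
    resampleProb μ X (fun ω => (Y ω, Z ω)) K S =
      ∫⁻ ω, ∫⁻ x', crossAcceptProb K η S (Y ω) x' x' ∂κ (Y ω) ∂μ :=
  calc resampleProb μ X (fun ω => (Y ω, Z ω)) K S
      = ∫⁻ ω, crossAcceptProb K η S (Y ω) (X ω) (X ω) ∂μ :=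
        lintegral_of_hasCondDistrib
          (f := fun t : (β × E) × F => K (t.1.1, t.2) (Prod.mk t.1.2 ⁻¹' S)) hη
          (measurable_kernel_apply_prodMk_preimage hS (by fun_prop) (by fun_prop))
    _ = ∫⁻ ω, ∫⁻ x', crossAcceptProb K η S (Y ω) x' x' ∂κ (Y ω) ∂μ :=
        lintegral_of_hasCondDistrib (f := fun t : β × E => crossAcceptProb K η S t.1 t.2 t.2) hκ
          ((measurable_crossAcceptProb hS).comp (f := fun t : β × E => (t, t.2)) (by fun_prop))

lemma crossAcceptProb_add_indicator_le [IsMarkovKernel K] [IsMarkovKernel η] {c : ℝ≥0∞}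
    (hTV : ∀ y x x', (x, x') ∈ S → tvDist (η (y, x)) (η (y, x')) ≤ c) (y : β) (x x' : E) :
    crossAcceptProb K η S y x x' + (Prod.mk x ⁻¹' S).indicator 1 x' ≤
      crossAcceptProb K η S y x' x' + (c + 1) := by
  by_cases hxx' : (x, x') ∈ S
  · rw [Set.indicator_of_mem (show x' ∈ Prod.mk x ⁻¹' S from hxx'), Pi.one_apply, ← add_assoc]
    gcongr
    calc crossAcceptProb K η S y x x'
        ≤ crossAcceptProb K η S y x' x' + tvDist (η (y, x)) (η (y, x')) :=
          lintegral_le_lintegral_add_tvDist fun _ => prob_le_one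
      _ ≤ crossAcceptProb K η S y x' x' + c := by
          gcongr
          exact hTV y x x' hxx'
  · rw [Set.indicator_of_notMem (show x' ∉ Prod.mk x ⁻¹' S from hxx'), add_zero]
    calc crossAcceptProb K η S y x x' ≤ 1 := lintegral_le_const (.of_forall fun _ => prob_le_one)
      _ ≤ crossAcceptProb K η S y x' x' + (c + 1) := le_add_self.trans le_add_self

lemma two_mul_resampleProb_le [IsProbabilityMeasure μ] [IsMarkovKernel κ] [IsMarkovKernel K]
    [IsMarkovKernel η] (hκ : HasCondDistrib X Y κ μ)
    (hK : HasCondDistrib X (fun ω => (Y ω, Z ω)) K μ)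
    (hη : HasCondDistrib Z (fun ω => (Y ω, X ω)) η μ)
    (hS : MeasurableSet S) (hsymm : Prod.swap ⁻¹' S = S) {c : ℝ≥0∞}
    (hTV : ∀ y x x', (x, x') ∈ S → tvDist (η (y, x)) (η (y, x')) ≤ c) :
    2 * resampleProb μ X Y κ S ≤ resampleProb μ X (fun ω => (Y ω, Z ω)) K S + (c + 1) := by
  have hSx (x : E) : MeasurableSet (Prod.mk x ⁻¹' S) := measurable_prodMk_left hS
  have hmeas : AEMeasurable (fun ω => κ (Y ω) (Prod.mk (X ω) ⁻¹' S)) μ :=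
    (measurable_kernel_apply_prodMk_preimage hS measurable_fst
      measurable_snd).comp_aemeasurable hκ.aemeasurable
  calc 2 * resampleProb μ X Y κ S
      = ∫⁻ ω, ∫⁻ x', crossAcceptProb K η S (Y ω) (X ω) x' ∂κ (Y ω) ∂μ +
          resampleProb μ X Y κ S := by
        rw [two_mul, ← resampleProb_eq_lintegral_crossAcceptProb hK hη hS hsymm]
    _ = ∫⁻ ω, ∫⁻ x', (crossAcceptProb K η S (Y ω) (X ω) x' +
          (Prod.mk (X ω) ⁻¹' S).indicator 1 x') ∂κ (Y ω) ∂μ := by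
        rw [resampleProb, ← lintegral_add_right' _ hmeas]
        refine lintegral_congr fun ω => ?_
        rw [lintegral_add_right _ (measurable_one.indicator (hSx _)),
          lintegral_indicator_one (hSx _)]
    _ ≤ ∫⁻ ω, ∫⁻ x', (crossAcceptProb K η S (Y ω) x' x' + (c + 1)) ∂κ (Y ω) ∂μ :=
        lintegral_mono fun ω => lintegral_mono fun x' =>
          crossAcceptProb_add_indicator_le hTV (Y ω) (X ω) x'
    _ = resampleProb μ X (fun ω => (Y ω, Z ω)) K S + (c + 1) := by
        rw [resampleProb_prodMk_eq_lintegral_crossAcceptProb hκ hη hS]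
        simp only [lintegral_add_right _ measurable_const, lintegral_const, measure_univ, mul_one]

end Resampling

section GaussianChannel

variable {β : Type*} [MeasurableSpace β] {d : ℕ} {σ : ℝ}

/-- The channel of an additive measurement `Z = X + N(0, σ² I_d)` with side information `Y`: it
sends `(Y, X)` to the law of `Z`. -/
noncomputable def gaussChannel (β : Type*) [MeasurableSpace β] (d : ℕ) (σ : ℝ) :
    Kernel (β × EuclideanSpace ℝ (Fin d)) (EuclideanSpace ℝ (Fin d)) :=
  noiseKernel (gaussMeasure d (σ ^ 2)) fun t => t.1.2 + t.2

lemma isMarkovKernel_gaussChannel (hσ : σ ≠ 0) : IsMarkovKernel (gaussChannel β d σ) :=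
  have := isProbabilityMeasure_gaussMeasure (d := d) (sq_pos_of_ne_zero hσ)
  isMarkovKernel_noiseKernel (by fun_prop)

lemma gaussChannel_apply (y : β) (x : EuclideanSpace ℝ (Fin d)) :
    gaussChannel β d σ (y, x) = (gaussMeasure d (σ ^ 2)).map (x + ·) := by
  have : SFinite (gaussMeasure d (σ ^ 2)) := by
    unfold gaussMeasure
    infer_instance
  exact noiseKernel_apply (by fun_prop) _

lemma tvDist_gaussChannel_le (hσ : 0 < σ) (y : β) (x x' : EuclideanSpace ℝ (Fin d)) :
    tvDist (gaussChannel β d σ (y, x)) (gaussChannel β d σ (y, x')) ≤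
      ENNReal.ofReal (‖x - x'‖ / (2 * σ)) := by
  rw [gaussChannel_apply, gaussChannel_apply]
  simpa only [Real.sqrt_sq hσ.le] using
    tvDist_map_add_left_gaussMeasure_le (sq_pos_of_pos hσ) x x'

lemma hasCondDistrib_gaussChannel {Ω : Type*} [MeasurableSpace Ω] {μ : Measure Ω}
    {X ε : Ω → EuclideanSpace ℝ (Fin d)} {Y : Ω → β} (hσ : σ ≠ 0)
    (hX : AEMeasurable X μ) (hY : AEMeasurable Y μ) (hε : HasLaw ε (gaussMeasure d (σ ^ 2)) μ)
    (hindep : IndepFun (fun ω => (X ω, Y ω)) ε μ) :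
    HasCondDistrib (fun ω => X ω + ε ω) (fun ω => (Y ω, X ω)) (gaussChannel β d σ) μ :=
  have := isProbabilityMeasure_gaussMeasure (d := d) (sq_pos_of_ne_zero hσ)
  hasCondDistrib_noiseKernel (hY.prodMk hX) hε (hindep.comp measurable_swap measurable_id)
    (φ := fun t => t.1.2 + t.2) (by fun_prop)

end GaussianChannel

lemma ofReal_one_sub_three_mul_le {δ : ℝ} (hδ : 0 ≤ δ) {a b : ℝ≥0∞}
    (ha : ENNReal.ofReal (1 - δ) ≤ a) (hab : 2 * a ≤ b + (ENNReal.ofReal δ + 1)) :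
    ENNReal.ofReal (1 - 3 * δ) ≤ b :=
  calc ENNReal.ofReal (1 - 3 * δ) = 2 * ENNReal.ofReal (1 - δ) - (ENNReal.ofReal δ + 1) := by
        rw [← ENNReal.ofReal_ofNat, ← ENNReal.ofReal_mul (by norm_num), ← ENNReal.ofReal_one,
          ← ENNReal.ofReal_add hδ zero_le_one, ← ENNReal.ofReal_sub _ (by positivity)]
        ring_nf
    _ ≤ b := tsub_le_iff_right.mpr ((mul_le_mul_right ha 2).trans hab)


/-- Suppose a fresh sample `X̂` from the conditional law of `X` given `Y`
satisfies `P[‖X − X̂‖ ≤ r] ≥ 1 − δ` (this probability being the expectation over `ω` of the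
conditional-kernel mass of the ball of radius `r` around `X(ω)`).  Let `Z = X + ε` with
`ε ~ N(0, σ² I_d)` independent of `(X, Y)` and `σ ≥ r/(2δ)`.  Then a fresh sample `X̂` from
the conditional law of `X` given `(Y, Z)` satisfies `P[‖X − X̂‖ ≤ r] ≥ 1 − 3δ`. -/
theorem extra_gaussian_measurement_no_hurt (d : ℕ)
    {Ω β : Type*} [MeasureSpace Ω] [IsProbabilityMeasure (ℙ : Measure Ω)]
    [MeasurableSpace β]
    (X : Ω → EuclideanSpace ℝ (Fin d)) (Y : Ω → β)
    (eps : Ω → EuclideanSpace ℝ (Fin d))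
    (hX : Measurable X) (hY : Measurable Y) (heps : Measurable eps)
    (r δ σ : ℝ) (hr : 0 < r) (hδ0 : 0 < δ) (hδ1 : δ < 1)
    (hepslaw : Measure.map eps ℙ = gaussMeasure d (σ ^ 2))
    (hindep : IndepFun (fun ω => (X ω, Y ω)) eps ℙ)
    (Z : Ω → EuclideanSpace ℝ (Fin d)) (hZ : ∀ ω, Z ω = X ω + eps ω)
    (h : ENNReal.ofReal (1 - δ) ≤
      ∫⁻ ω, (condDistrib X Y ℙ) (Y ω) {x' | ‖X ω - x'‖ ≤ r} ∂ℙ)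
    (hσ : r / (2 * δ) ≤ σ) :
    ENNReal.ofReal (1 - 3 * δ) ≤
      ∫⁻ ω, (condDistrib X (fun ω' => (Y ω', Z ω')) ℙ) (Y ω, Z ω) {x' | ‖X ω - x'‖ ≤ r} ∂ℙ := by
  obtain rfl : Z = fun ω => X ω + eps ω := funext hZ
  have hσ0 : 0 < σ := (by positivity : 0 < r / (2 * δ)).trans_le hσ
  have := isMarkovKernel_gaussChannel (β := β) (d := d) hσ0.ne'
  have hTV (y : β) (x x' : EuclideanSpace ℝ (Fin d)) (hxx' : ‖x - x'‖ ≤ r) :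
      tvDist (gaussChannel β d σ (y, x)) (gaussChannel β d σ (y, x')) ≤ ENNReal.ofReal δ := by
    refine (tvDist_gaussChannel_le hσ0 y x x').trans (ENNReal.ofReal_le_ofReal ?_)
    rw [div_le_iff₀ (by positivity)] at hσ ⊢
    linarith
  have hS : MeasurableSet {p : EuclideanSpace ℝ (Fin d) × EuclideanSpace ℝ (Fin d) |
    ‖p.1 - p.2‖ ≤ r} := measurableSet_le (by fun_prop) measurable_const
  exact ofReal_one_sub_three_mul_le hδ0.le h (two_mul_resampleProb_le
    (hasCondDistrib_condDistrib hX.aemeasurable hY.aemeasurable)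
    (hasCondDistrib_condDistrib hX.aemeasurable (by fun_prop))
    (hasCondDistrib_gaussChannel hσ0.ne' hX.aemeasurable hY.aemeasurable
      ⟨heps.aemeasurable, hepslaw⟩ hindep)
    hS (Set.ext fun p => by simp [norm_sub_rev]) hTV)
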